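/- arXiv:1005.5316 — 7 statements merged into one kernel-verified Lean document; each statement's English description precedes it below -/
import Mathlib

section
/- Let x : ℕ → ℝ be a sequence with 0 ≤ x_j ≤ 1 for all j, and for each i define R_i := { j ∈ ℕ | ⌊2^i · x_j⌋ is even }. If f : ℕ → ℕ is strictly monotone and the range of f is strongly cohesive for (R_i)_{i∈ℕ}, then the subsequence (x_{f(j)})_{j∈ℕ} is a Cauchy sequence, i.e. for every n there exists s such that |x_{f(v)} − x_{f(w)}| < 2^{−n} for all v, w ≥ s. -/
/-!
The even/odd pattern of `⌊2 ^ i * a⌋` for `i ≤ n` is the binary expansion of `a` up to the `n`-th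
digit, except that at `i = 0` only the parity of `⌊a⌋` is visible. For numbers at distance at most
`1` that parity already determines the integer part, and each further parity picks one of the two
halves of the current dyadic interval. Hence numbers with equal patterns lie in the same dyadic
interval of length `2 ^ (-n)`, and strong cohesiveness makes the first `n + 1` parities of the
sequence stabilise simultaneously.
-/

theorem int_eq_of_even_iff_of_abs_sub_lt_two {m n : ℤ} (heven : Even m ↔ Even n)
    (hclose : |m - n| < 2) : m = n :=
  sub_eq_zero.mp <| Int.eq_zero_of_abs_lt_dvd (Int.even_sub.mpr heven).two_dvd hclose

theorem int_eq_of_even_iff_of_ediv_two_eq {m n : ℤ} (heven : Even m ↔ Even n)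
    (hdiv : m / 2 = n / 2) : m = n := by
  rw [Int.even_iff, Int.even_iff] at heven
  omega

section Floor

variable {A : Type*} [Ring A] [LinearOrder A] [IsStrictOrderedRing A] [FloorRing A] {a b : A}

theorem abs_floor_sub_floor_lt_two_of_abs_sub_le_one (h : |a - b| ≤ 1) : |⌊a⌋ - ⌊b⌋| < 2 := by
  have floor_le_add_one {c d : A} (hcd : c - d ≤ 1) : ⌊c⌋ ≤ ⌊d⌋ + 1 := by
    rw [← Int.floor_add_one]
    exact Int.floor_le_floor (sub_le_iff_le_add'.mp hcd)
  obtain ⟨hba, hab⟩ := abs_sub_le_iff.mp h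
  have := floor_le_add_one hba
  have := floor_le_add_one hab
  rw [abs_sub_lt_iff]
  omega

theorem floor_two_mul_ediv_two (a : A) : ⌊2 * a⌋ / 2 = ⌊a⌋ := by
  exact_mod_cast Int.natCast_mul_floor_div_cancel two_ne_zero a

theorem floor_two_pow_mul_eq_of_even_iff (hclose : |a - b| ≤ 1) {n : ℕ}
    (heven : ∀ i ≤ n, (Even ⌊2 ^ i * a⌋ ↔ Even ⌊2 ^ i * b⌋)) :
    ⌊2 ^ n * a⌋ = ⌊2 ^ n * b⌋ := by
  induction n with
  | zero =>
    refine int_eq_of_even_iff_of_abs_sub_lt_two (heven 0 le_rfl) ?_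
    simpa using abs_floor_sub_floor_lt_two_of_abs_sub_le_one hclose
  | succ n ih =>
    refine int_eq_of_even_iff_of_ediv_two_eq (heven (n + 1) le_rfl) ?_
    simp only [pow_succ', mul_assoc, floor_two_mul_ediv_two]
    exact ih fun i hi => heven i (Nat.le_succ_of_le hi)

end Floor

theorem abs_sub_lt_of_floor_two_pow_mul_eq {K : Type*} [Field K] [LinearOrder K]
    [IsStrictOrderedRing K] [FloorRing K] {a b : K} {n : ℕ} (h : ⌊2 ^ n * a⌋ = ⌊2 ^ n * b⌋) :
    |a - b| < 2 ^ (-(n : ℤ)) := by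
  have hpow : (0 : K) < 2 ^ n := by positivity
  have hscaled : 2 ^ n * |a - b| < 1 := by
    simpa only [← mul_sub, abs_mul, abs_of_pos hpow] using Int.abs_sub_lt_one_of_floor_eq_floor h
  rwa [zpow_neg, zpow_natCast, ← one_div, lt_div_iff₀' hpow]

section Cohesive

variable {ι β : Type*} [LE β]

/-- The family `f` has strongly cohesive range for `R`: a single index `s` works for the first `n`
sets at once. The sequences of the paper are the case `ι = β = ℕ`. -/
def HasStronglyCohesiveRange (R : ℕ → Set ι) (f : β → ι) : Prop :=
  ∀ n : ℕ, ∃ s : β, ∀ i < n, (∀ j ≥ s, f j ∈ R i) ∨ (∀ j ≥ s, f j ∉ R i)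

theorem HasStronglyCohesiveRange.exists_forall_mem_iff {R : ℕ → Set ι} {f : β → ι}
    (h : HasStronglyCohesiveRange R f) (n : ℕ) :
    ∃ s : β, ∀ v ≥ s, ∀ w ≥ s, ∀ i < n, (f v ∈ R i ↔ f w ∈ R i) := by
  obtain ⟨s, hs⟩ := h n
  refine ⟨s, fun v hv w hw i hi => ?_⟩
  rcases hs i hi with hmem | hnotMem
  · exact iff_of_true (hmem v hv) (hmem w hw)
  · exact iff_of_false (hnotMem v hv) (hnotMem w hw)

/-- The set `R_i` of indices `j` for which the `i`-th binary digit of `x j` is `0`, the `0`-th digit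
being the parity of the integer part. -/
def evenFloorSet {A : Type*} [Ring A] [LinearOrder A] [FloorRing A] (x : ι → A) (i : ℕ) : Set ι :=
  {j | Even ⌊2 ^ i * x j⌋}

theorem stcoh_implies_bw_weak_general {K : Type*} [Field K] [LinearOrder K] [IsStrictOrderedRing K]
    [FloorRing K] {x : ι → K} (hx : ∀ j k, |x j - x k| ≤ 1) {f : β → ι}
    (hcoh : HasStronglyCohesiveRange (evenFloorSet x) f) (n : ℕ) :
    ∃ s : β, ∀ v ≥ s, ∀ w ≥ s, |x (f v) - x (f w)| < 2 ^ (-(n : ℤ)) := by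
  obtain ⟨s, hs⟩ := hcoh.exists_forall_mem_iff (n + 1)
  refine ⟨s, fun v hv w hw => abs_sub_lt_of_floor_two_pow_mul_eq ?_⟩
  exact floor_two_pow_mul_eq_of_even_iff (hx _ _) fun i hi => hs v hv w hw i (Nat.lt_succ_of_le hi)

end Cohesive

/-- If `(x_j)` is a sequence in `[0,1]`, `R_i = { j | ⌊2^i * x_j⌋ is even }`, and
`f` is strictly monotone with strongly cohesive range for `(R_i)`, then the
subsequence `(x_{f(j)})` is a Cauchy sequence. -/
theorem stcoh_implies_bw_weak (x : ℕ → ℝ) (hx : ∀ j, 0 ≤ x j ∧ x j ≤ 1)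
    (R : ℕ → Set ℕ) (hR : ∀ i, R i = { j : ℕ | Even ⌊(2 : ℝ) ^ i * x j⌋ })
    (f : ℕ → ℕ) (hf : StrictMono f)
    (hcoh : ∀ n : ℕ, ∃ s : ℕ, ∀ i < n,
      (∀ j ≥ s, f j ∈ R i) ∨ (∀ j ≥ s, f j ∉ R i)) :
    ∀ n : ℕ, ∃ s : ℕ, ∀ v ≥ s, ∀ w ≥ s,
      |x (f v) - x (f w)| < (2 : ℝ) ^ (-(n : ℤ)) := by
  obtain rfl : R = evenFloorSet x := funext hR
  have hclose (j k : ℕ) : |x j - x k| ≤ 1 := by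
    simpa using abs_sub_le_of_le_of_le (hx j).1 (hx j).2 (hx k).1 (hx k).2
  exact stcoh_implies_bw_weak_general hclose hcoh
end

section
/- Let R : ℕ → Set ℕ be a sequence of subsets of ℕ, and for each i define the real number x_i := Σ_{n=0}^∞ 2·χ(i ∈ R_n)/3^{n+1}, where χ(P) = 1 if P holds and 0 otherwise. If f : ℕ → ℕ is strictly monotone and (x_{f(j)})_{j∈ℕ} is a Cauchy sequence of real numbers, then the range of f is strongly cohesive for (R_n)_{n∈ℕ}. -/
open scoped Classical

/-!
The number `x_i` has a ternary expansion with digits `0` and `2` only, the `n`-th digit being `2`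
exactly when `i ∈ R n`. Two expansions that first differ at position `n`, by a gap of at least `2`
between the digits, are at least `3 ^ (-(n + 1))` apart, because the tails contribute at most one
unit of position `n`. Hence numbers closer than `3 ^ (-n)` share their first `n` digits, and along
a Cauchy sequence the first `n` digits are eventually constant.
-/

open Real

section SeparatedDigits

variable {b : ℕ}

theorem digit_gap_le_ofDigits_sub_ofDigits {u v : ℕ → Fin b} {n : ℕ}
    (agree : ∀ i < n, u i = v i) :
    ((v n : ℝ) - u n - 1) * ((b : ℝ) ^ (n + 1))⁻¹ ≤ ofDigits v - ofDigits u := by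
  have head_sum_eq :
      ∑ i ∈ Finset.range n, ofDigitsTerm u i = ∑ i ∈ Finset.range n, ofDigitsTerm v i :=
    Finset.sum_congr rfl fun i hi ↦ by
      simp only [ofDigitsTerm, agree i (Finset.mem_range.mp hi)]
  have tail_sub_ge :
      -1 ≤ ofDigits (fun i ↦ v (i + (n + 1))) - ofDigits (fun i ↦ u (i + (n + 1))) := by
    linarith [ofDigits_nonneg fun i ↦ v (i + (n + 1)), ofDigits_le_one fun i ↦ u (i + (n + 1))]
  have unit_nonneg : 0 ≤ ((b : ℝ) ^ (n + 1))⁻¹ := by positivity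
  rw [ofDigits_eq_sum_add_ofDigits u (n + 1), ofDigits_eq_sum_add_ofDigits v (n + 1),
    Finset.sum_range_succ, Finset.sum_range_succ, head_sum_eq]
  simp only [ofDigitsTerm]
  linarith [mul_le_mul_of_nonneg_left tail_sub_ge unit_nonneg]

/-- A set of base-`b` digits no two of which are consecutive integers. Such digits make expansions
unique and stable under small perturbations; `{0, 2}` in base `3` is the case of the Cantor set. -/
def NoConsecutiveDigits (S : Set (Fin b)) : Prop :=
  ∀ ⦃p⦄, p ∈ S → ∀ ⦃q⦄, q ∈ S → p < q → (p : ℕ) + 2 ≤ q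

namespace NoConsecutiveDigits

variable {S : Set (Fin b)}

theorem inv_pow_le_abs_ofDigits_sub (hS : NoConsecutiveDigits S) {u v : ℕ → Fin b} {n : ℕ}
    (hu : u n ∈ S) (hv : v n ∈ S) (agree : ∀ i < n, u i = v i) (differ : u n ≠ v n) :
    ((b : ℝ) ^ (n + 1))⁻¹ ≤ |ofDigits u - ofDigits v| := by
  wlog hlt : u n < v n generalizing u v
  · rw [abs_sub_comm]
    exact this hv hu (fun i hi ↦ (agree i hi).symm) differ.symm
      (differ.lt_or_gt.resolve_left hlt)
  have gap : (1 : ℝ) ≤ (v n : ℝ) - u n - 1 := by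
    have : ((u n : ℕ) : ℝ) + 2 ≤ (v n : ℕ) := mod_cast hS hu hv hlt
    linarith
  calc ((b : ℝ) ^ (n + 1))⁻¹
      ≤ ((v n : ℝ) - u n - 1) * ((b : ℝ) ^ (n + 1))⁻¹ :=
        le_mul_of_one_le_left (by positivity) gap
    _ ≤ ofDigits v - ofDigits u := digit_gap_le_ofDigits_sub_ofDigits agree
    _ ≤ |ofDigits u - ofDigits v| := abs_sub_comm (ofDigits u) _ ▸ le_abs_self _

theorem digits_eq_of_abs_ofDigits_sub_lt (hS : NoConsecutiveDigits S) {u v : ℕ → Fin b} {n : ℕ}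
    (hu : ∀ i < n, u i ∈ S) (hv : ∀ i < n, v i ∈ S)
    (close : |ofDigits u - ofDigits v| < ((b : ℝ) ^ n)⁻¹) :
    ∀ i < n, u i = v i := by
  intro i
  induction i using Nat.strong_induction_on with
  | h i agree =>
    intro hi
    by_contra differ
    have one_le_base : (1 : ℝ) ≤ b := mod_cast (u 0).pos
    have far : ((b : ℝ) ^ (i + 1))⁻¹ ≤ |ofDigits u - ofDigits v| :=
      hS.inv_pow_le_abs_ofDigits_sub (hu i hi) (hv i hi)
        (fun k hk ↦ agree k hk (hk.trans hi)) differ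
    have scale_le : ((b : ℝ) ^ n)⁻¹ ≤ ((b : ℝ) ^ (i + 1))⁻¹ := by
      gcongr
      exact hi
    exact (scale_le.trans far).not_gt close

theorem exists_forall_ge_digits_eq_of_cauchySeq (hS : NoConsecutiveDigits S)
    {ι : Type*} [Nonempty ι] [SemilatticeSup ι] {d : ι → ℕ → Fin b} (hd : ∀ j i, d j i ∈ S)
    (hcauchy : CauchySeq fun j ↦ ofDigits (d j)) (n : ℕ) :
    ∃ s, ∀ j ≥ s, ∀ i < n, d j i = d s i := by
  obtain ⟨j₀⟩ := ‹Nonempty ι›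
  have base_pos : (0 : ℝ) < b := mod_cast (d j₀ 0).pos
  obtain ⟨s, hs⟩ := Metric.cauchySeq_iff'.1 hcauchy ((b : ℝ) ^ n)⁻¹ (by positivity)
  exact ⟨s, fun j hj ↦ hS.digits_eq_of_abs_ofDigits_sub_lt (fun i _ ↦ hd j i) (fun i _ ↦ hd s i)
    (hs j hj)⟩

end NoConsecutiveDigits

theorem noConsecutiveDigits_zero_two : NoConsecutiveDigits ({0, 2} : Set (Fin 3)) := by
  rintro p (rfl | rfl) q (rfl | rfl) hpq <;> simp at hpq ⊢

end SeparatedDigits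

section MembershipDigits

variable {α : Type*} (R : ℕ → Set α)

/-- The membership pattern of `a` in the sets `R n`, written as the ternary digits of a point of
the Cantor set: the `n`-th digit is `2` if `a ∈ R n` and `0` otherwise. -/
noncomputable def membershipDigits (a : α) (n : ℕ) : Fin 3 :=
  if a ∈ R n then 2 else 0

theorem membershipDigits_mem_zero_two (a : α) (n : ℕ) :
    membershipDigits R a n ∈ ({0, 2} : Set (Fin 3)) := by
  unfold membershipDigits
  split_ifs <;> simp

variable {R} in
theorem membershipDigits_eq_iff {a c : α} {n : ℕ} :
    membershipDigits R a n = membershipDigits R c n ↔ (a ∈ R n ↔ c ∈ R n) := by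
  unfold membershipDigits
  split_ifs <;> simp [*]

theorem ofDigits_membershipDigits (a : α) :
    ofDigits (membershipDigits R a) =
      ∑' n : ℕ, 2 * (if a ∈ R n then (1 : ℝ) else 0) / 3 ^ (n + 1) := by
  refine tsum_congr fun n ↦ ?_
  unfold ofDigitsTerm membershipDigits
  split_ifs <;> simp [div_eq_mul_inv]

end MembershipDigits

theorem bw_weak_implies_stcoh_general {α ι : Type*} [Nonempty ι] [SemilatticeSup ι]
    (R : ℕ → Set α) (x : α → ℝ)
    (hx : ∀ a, x a = ∑' n : ℕ, 2 * (if a ∈ R n then (1 : ℝ) else 0) / 3 ^ (n + 1))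
    (f : ι → α) (hcauchy : CauchySeq (fun j => x (f j))) (n : ℕ) :
    ∃ s : ι, ∀ i < n, (∀ j ≥ s, f j ∈ R i) ∨ (∀ j ≥ s, f j ∉ R i) := by
  simp only [hx, ← ofDigits_membershipDigits] at hcauchy
  obtain ⟨s, hs⟩ := noConsecutiveDigits_zero_two.exists_forall_ge_digits_eq_of_cauchySeq
    (fun j ↦ membershipDigits_mem_zero_two R (f j)) hcauchy n
  have mem_iff : ∀ i < n, ∀ j ≥ s, (f j ∈ R i ↔ f s ∈ R i) :=
    fun i hi j hj ↦ membershipDigits_eq_iff.1 (hs j hj i hi)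
  refine ⟨s, fun i hi ↦ ?_⟩
  by_cases hsi : f s ∈ R i
  · exact Or.inl fun j hj ↦ (mem_iff i hi j hj).2 hsi
  · exact Or.inr fun j hj ↦ mt (mem_iff i hi j hj).1 hsi

/-- If `x_i = Σ_n 2·χ(i ∈ R_n)/3^(n+1)` encodes the membership pattern of `i`
in the sets `R_n`, `f` is strictly monotone and `(x_{f(j)})` is a Cauchy
sequence of reals, then the range of `f` is strongly cohesive for `(R_n)`. -/
theorem bw_weak_implies_stcoh (R : ℕ → Set ℕ) (x : ℕ → ℝ)
    (hx : ∀ i, x i = ∑' n : ℕ, 2 * (if i ∈ R n then (1 : ℝ) else 0) / 3 ^ (n + 1))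
    (f : ℕ → ℕ) (hf : StrictMono f)
    (hcauchy : CauchySeq (fun j => x (f j))) :
    ∀ n : ℕ, ∃ s : ℕ, ∀ i < n,
      (∀ j ≥ s, f j ∈ R i) ∨ (∀ j ≥ s, f j ∉ R i) :=
  bw_weak_implies_stcoh_general R x hx f hcauchy
end

section
/- For every sequence R : ℕ → Set ℕ of subsets of ℕ there exists an infinite set S ⊆ ℕ that is strongly cohesive for (R_n)_{n∈ℕ}: for every n there exists s such that for every i < n, either every j ∈ S with j ≥ s satisfies j ∈ R_i, or every j ∈ S with j ≥ s satisfies j ∉ R_i. -/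
/-!
The membership patterns `k ↦ (i ↦ k ∈ R i)` form a sequence in a countable product of finite
discrete spaces. Such a product is compact and first countable, so by Bolzano–Weierstraß some
subsequence converges, which means that it is eventually constant in every coordinate. The indices
of this subsequence form a cohesive set, and finitely many thresholds have a common upper bound.
-/

open Filter Set

theorem exists_strictMono_forall_eventually_eq {ι : Type*} [Countable ι] {κ : ι → Type*}
    [∀ i, Finite (κ i)] (x : ℕ → ∀ i, κ i) :
    ∃ (a : ∀ i, κ i) (φ : ℕ → ℕ), StrictMono φ ∧ ∀ i, ∀ᶠ k in atTop, x (φ k) i = a i := by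
  let _ : ∀ i, TopologicalSpace (κ i) := fun _ ↦ ⊥
  have : ∀ i, DiscreteTopology (κ i) := fun _ ↦ ⟨rfl⟩
  obtain ⟨a, φ, hφ, hlim⟩ := CompactSpace.tendsto_subseq x
  refine ⟨a, φ, hφ, fun i ↦ ?_⟩
  have hlim_i : Tendsto (fun k ↦ x (φ k) i) atTop (nhds (a i)) := tendsto_pi_nhds.1 hlim i
  rwa [nhds_discrete, tendsto_pure] at hlim_i

theorem eventually_atTop_forall_mem_not_le {α : Type*} [Preorder α] [NoMaxOrder α] {T : Set α}
    (hT : T.Finite) : ∀ᶠ s in atTop, ∀ j ∈ T, ¬s ≤ j :=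
  (eventually_all_finite hT).2 fun j _ ↦ (eventually_gt_atTop j).mono fun _ ↦ not_le_of_gt

/-- `S` is cohesive for the family `R` if, up to finitely many elements, it is contained in `R i` or
in its complement, for each `i` separately. Infinitude of `S` is not part of the definition. -/
def IsCohesive {ι α : Type*} (R : ι → Set α) (S : Set α) : Prop :=
  ∀ i, (S \ R i).Finite ∨ (S ∩ R i).Finite

theorem exists_infinite_isCohesive {ι α : Type*} [Countable ι] [Infinite α] (R : ι → Set α) :
    ∃ S : Set α, S.Infinite ∧ IsCohesive R S := by
  let e : ℕ ↪ α := Infinite.natEmbedding α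
  obtain ⟨a, φ, hφ, hconst⟩ := exists_strictMono_forall_eventually_eq fun k i ↦ e k ∈ R i
  refine ⟨range (e ∘ φ), infinite_range_of_injective (e.injective.comp hφ.injective), fun i ↦ ?_⟩
  have hfin : {k | (e (φ k) ∈ R i) ≠ a i}.Finite := by
    simpa only [← Nat.cofinite_eq_atTop, eventually_cofinite] using hconst i
  by_cases hi : a i
  · refine .inl ((hfin.image (e ∘ φ)).subset ?_)
    rintro _ ⟨⟨k, rfl⟩, hk⟩
    exact ⟨k, fun h ↦ hk (h.mpr hi), rfl⟩
  · refine .inr ((hfin.image (e ∘ φ)).subset ?_)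
    rintro _ ⟨⟨k, rfl⟩, hk⟩
    exact ⟨k, fun h ↦ hi (h.mp hk), rfl⟩

theorem IsCohesive.exists_threshold {ι α : Type*} [Preorder α] [IsDirectedOrder α] [NoMaxOrder α]
    [Nonempty α] {R : ι → Set α} {S : Set α} (hS : IsCohesive R S) {F : Set ι} (hF : F.Finite) :
    ∃ s, ∀ i ∈ F, (∀ j ∈ S, s ≤ j → j ∈ R i) ∨ (∀ j ∈ S, s ≤ j → j ∉ R i) := by
  suffices hthreshold : ∀ i ∈ F, ∀ᶠ s in atTop,
      (∀ j ∈ S, s ≤ j → j ∈ R i) ∨ (∀ j ∈ S, s ≤ j → j ∉ R i) from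
    ((eventually_all_finite hF).2 hthreshold).exists
  intro i _
  rcases hS i with hdiff | hinter
  · filter_upwards [eventually_atTop_forall_mem_not_le hdiff] with s hs
    exact .inl fun j hj hsj ↦ by_contra fun hjR ↦ hs j ⟨hj, hjR⟩ hsj
  · filter_upwards [eventually_atTop_forall_mem_not_le hinter] with s hs
    exact .inr fun j hj hsj hjR ↦ hs j ⟨hj, hjR⟩ hsj

theorem strongly_cohesive_exists_general {ι : Type*} [Countable ι] (R : ι → Set ℕ) :
    ∃ S : Set ℕ, S.Infinite ∧ ∀ F : Set ι, F.Finite →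
      ∃ s : ℕ, ∀ i ∈ F, (∀ j ∈ S, s ≤ j → j ∈ R i) ∨ (∀ j ∈ S, s ≤ j → j ∉ R i) :=
  let ⟨S, hinf, hcoh⟩ := exists_infinite_isCohesive R
  ⟨S, hinf, fun _ hF ↦ hcoh.exists_threshold hF⟩

/-- The strong cohesive principle: for every sequence `(R_n)` of subsets of `ℕ`
there is an infinite set `S` that is strongly cohesive for `(R_n)`, i.e. for
every `n` there is a single threshold `s` beyond which the elements of `S` lie
entirely inside `R_i` or entirely outside `R_i`, simultaneously for all `i < n`. -/
theorem strongly_cohesive_exists (R : ℕ → Set ℕ) :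
    ∃ S : Set ℕ, S.Infinite ∧
      ∀ n : ℕ, ∃ s : ℕ, ∀ i < n,
        (∀ j ∈ S, s ≤ j → j ∈ R i) ∨ (∀ j ∈ S, s ≤ j → j ∉ R i) := by
  obtain ⟨S, hinf, hS⟩ := strongly_cohesive_exists_general R
  exact ⟨S, hinf, fun n ↦ hS (Iio n) (finite_Iio n)⟩
end

section
/- Let g_0, g_1 : ℕ → ℕ → ℕ be such that for each n and each i ∈ {0,1} the function k ↦ g_i(n,k) is nondecreasing, and assume that for every n at least one of the functions k ↦ g_0(n,k), k ↦ g_1(n,k) is unbounded. Define a sequence (h_k)_{k∈ℕ} of elements of ℕ → Bool by h_k(n) = true if g_0(n,k) < g_1(n,k) and h_k(n) = false otherwise. Then for every cluster point h : ℕ → Bool of (h_k) in Cantor space (meaning: for every n and every s there exists k ≥ s with h_k(i) = h(i) for all i ≤ n), and for every n: if k ↦ g_0(n,k) is bounded then h(n) = true, and if k ↦ g_1(n,k) is bounded then h(n) = false. -/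
section

open Filter Set

variable {ι κ α : Type*} [Preorder κ] [LinearOrder α]

theorem eventually_lt_of_bddAbove_range_of_not_bddAbove_range {u v : κ → α}
    (hu : BddAbove (range u)) (hv : Monotone v) (hv_unbdd : ¬BddAbove (range v)) :
    ∀ᶠ k in atTop, u k < v k := by
  obtain ⟨M, hM⟩ := hu
  obtain ⟨_, ⟨s, rfl⟩, hMs⟩ := not_bddAbove_iff.mp hv_unbdd M
  filter_upwards [eventually_ge_atTop s] with k hsk
  calc
    u k ≤ M := hM (mem_range_self k)
    _ < v s := hMs
    _ ≤ v k := hv hsk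

theorem bw_separation_core_general (g₀ g₁ : ι → κ → α)
    (hmono : ∀ n, Monotone (g₀ n) ∧ Monotone (g₁ n))
    (hunb : ∀ n, ¬BddAbove (range (g₀ n)) ∨ ¬BddAbove (range (g₁ n)))
    (hseq : κ → ι → Bool)
    (hdef : ∀ k n, hseq k n = decide (g₀ n k < g₁ n k))
    (h : ι → Bool)
    (hclu : ∀ n, ∃ᶠ k in atTop, hseq k n = h n) (n : ι) :
    (BddAbove (range (g₀ n)) → h n = true) ∧ (BddAbove (range (g₁ n)) → h n = false) := by
  constructor
  · intro hbdd
    have hlt : ∀ᶠ k in atTop, g₀ n k < g₁ n k :=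
      eventually_lt_of_bddAbove_range_of_not_bddAbove_range hbdd (hmono n).2
        ((hunb n).resolve_left (not_not_intro hbdd))
    obtain ⟨k, hk, hltk⟩ := ((hclu n).and_eventually hlt).exists
    rw [← hk, hdef, decide_eq_true hltk]
  · intro hbdd
    have hlt : ∀ᶠ k in atTop, g₁ n k < g₀ n k :=
      eventually_lt_of_bddAbove_range_of_not_bddAbove_range hbdd (hmono n).1
        ((hunb n).resolve_right (not_not_intro hbdd))
    obtain ⟨k, hk, hltk⟩ := ((hclu n).and_eventually hlt).exists
    rw [← hk, hdef, decide_eq_false hltk.not_gt]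

end

/-- Combinatorial core of the implication from Bolzano-Weierstraß to
Σ⁰₂-separation: if `g_0(n,·)`, `g_1(n,·)` are nondecreasing, for each `n` at
least one of them is unbounded, and `h_k(n) = (g_0(n,k) < g_1(n,k))`, then any
cluster point `h` of `(h_k)` in Cantor space satisfies `h(n) = true` whenever
`g_0(n,·)` is bounded, and `h(n) = false` whenever `g_1(n,·)` is bounded. -/
theorem bw_separation_core (g₀ g₁ : ℕ → ℕ → ℕ)
    (hmono : ∀ n, Monotone (g₀ n) ∧ Monotone (g₁ n))
    (hunb : ∀ n, (∀ M : ℕ, ∃ k, M < g₀ n k) ∨ (∀ M : ℕ, ∃ k, M < g₁ n k))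
    (hseq : ℕ → ℕ → Bool)
    (hdef : ∀ k n, hseq k n = decide (g₀ n k < g₁ n k))
    (h : ℕ → Bool)
    (hclu : ∀ n : ℕ, ∀ s : ℕ, ∃ k ≥ s, ∀ i ≤ n, hseq k i = h i) :
    ∀ n : ℕ,
      ((∃ M : ℕ, ∀ k, g₀ n k ≤ M) → h n = true) ∧
      ((∃ M : ℕ, ∀ k, g₁ n k ≤ M) → h n = false) := by
  have hfreq (n : ℕ) : ∃ᶠ k in Filter.atTop, hseq k n = h n :=
    Filter.frequently_atTop.mpr fun s => (hclu n s).imp fun _ hk => ⟨hk.1, hk.2 n le_rfl⟩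
  simpa only [bddAbove_def, Set.forall_mem_range] using
    bw_separation_core_general g₀ g₁ hmono
      (by simpa only [not_bddAbove_iff, Set.exists_range_iff] using hunb) hseq hdef h hfreq
end

section
/- Let b_0, b_1 : ℕ → ℕ → ℕ → Bool be computable functions such that for every n, (for every x there exists y with b_0(n,x,y) = true) or (for every x there exists y with b_1(n,x,y) = true). Then there exists a computable H : ℕ → ℕ → Bool such that, writing h_k := H(k,·) : ℕ → Bool, for every cluster point h : ℕ → Bool of the sequence (h_k) in Cantor space (meaning: for every n and every s there exists k ≥ s with h_k(i) = h(i) for all i ≤ n) and every n: if it is not the case that for every x there exists y with b_0(n,x,y) = true, then h(n) = true; and if it is not the case that for every x there exists y with b_1(n,x,y) = true, then h(n) = false. -/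
/-!
For each `i` and `n`, search for witnesses of `∃ y, bᵢ(n,x,y)` for `x = 0, 1, 2, …` in turn, moving
on to the next `x` only when the current one is settled. The number of settled `x` tends to infinity
if `∀ x ∃ y, bᵢ(n,x,y)` holds and stays bounded otherwise. So let `h_k(n)` say whether after `k`
steps the search for `b₀` lags behind the one for `b₁`: if exactly one of the two searches gets
stuck, `h_k(n)` is eventually constant with the value that separation requires, and every cluster
point inherits it.
-/

open Filter

/-- The number of `x` settled after a given number of steps of a search for witnesses of
`∃ y, c x y`, taken in the order `x = 0, 1, 2, …`. Step `k` tests the candidate `y = k.unpair.1`, so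
that each `y` is tested infinitely often. -/
def searchProgress (c : ℕ → ℕ → Bool) : ℕ → ℕ
  | 0 => 0
  | k + 1 => bif c (searchProgress c k) k.unpair.1 then searchProgress c k + 1
      else searchProgress c k

section searchProgress

variable {c d : ℕ → ℕ → Bool}

theorem searchProgress_succ_of_true {k : ℕ} (h : c (searchProgress c k) k.unpair.1 = true) :
    searchProgress c (k + 1) = searchProgress c k + 1 := by
  rw [searchProgress, h, cond_true]

theorem searchProgress_succ_of_false {k : ℕ} (h : c (searchProgress c k) k.unpair.1 = false) :
    searchProgress c (k + 1) = searchProgress c k := by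
  rw [searchProgress, h, cond_false]

theorem monotone_searchProgress (c : ℕ → ℕ → Bool) : Monotone (searchProgress c) := by
  refine monotone_nat_of_le_succ fun k => ?_
  cases h : c (searchProgress c k) k.unpair.1
  · exact (searchProgress_succ_of_false h).ge
  · exact (Nat.le_succ _).trans (searchProgress_succ_of_true h).ge

theorem searchProgress_le_of_forall_eq_false {x : ℕ} (hx : ∀ y, c x y = false) (k : ℕ) :
    searchProgress c k ≤ x := by
  induction k with
  | zero => exact Nat.zero_le x
  | succ k ih =>
    cases h : c (searchProgress c k) k.unpair.1
    · exact (searchProgress_succ_of_false h).trans_le ih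
    · have hne : searchProgress c k ≠ x := fun heq => by simp [heq, hx] at h
      exact (searchProgress_succ_of_true h).trans_le (ih.lt_of_ne hne)

theorem exists_le_searchProgress (hc : ∀ x, ∃ y, c x y = true) (x : ℕ) :
    ∃ k, x ≤ searchProgress c k := by
  induction x with
  | zero => exact ⟨0, Nat.zero_le _⟩
  | succ x ih =>
    obtain ⟨k, hk⟩ := ih
    obtain ⟨y, hy⟩ := hc x
    -- `Nat.pair y k` is a step after `k` at which the candidate `y` is tested.
    have hx : x ≤ searchProgress c (Nat.pair y k) :=
      hk.trans (monotone_searchProgress c (Nat.right_le_pair y k))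
    rcases hx.eq_or_lt with heq | hlt
    · have htest : c (searchProgress c (Nat.pair y k)) (Nat.pair y k).unpair.1 = true := by
        rw [← heq, Nat.unpair_pair, hy]
      exact ⟨Nat.pair y k + 1, by rw [searchProgress_succ_of_true htest, ← heq]⟩
    · exact ⟨Nat.pair y k, hlt⟩

theorem tendsto_searchProgress_atTop (hc : ∀ x, ∃ y, c x y = true) :
    Tendsto (searchProgress c) atTop atTop :=
  tendsto_atTop_atTop_of_monotone (monotone_searchProgress c) (exists_le_searchProgress hc)

theorem eventually_searchProgress_lt (hc : ¬ ∀ x, ∃ y, c x y = true)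
    (hd : ∀ x, ∃ y, d x y = true) :
    ∀ᶠ k in atTop, searchProgress c k < searchProgress d k := by
  obtain ⟨x, hx⟩ : ∃ x, ∀ y, c x y = false := by simpa using hc
  filter_upwards [(tendsto_searchProgress_atTop hd).eventually_gt_atTop x] with k hk
  exact (searchProgress_le_of_forall_eq_false hx k).trans_lt hk

end searchProgress

section Computability

variable {α : Type*} [Primcodable α] {b b₀ b₁ : α → ℕ → ℕ → Bool}

theorem computable₂_searchProgress
    (hb : Computable fun p : α × ℕ × ℕ => b p.1 p.2.1 p.2.2) :
    Computable₂ fun (k : ℕ) (a : α) => searchProgress (b a) k := by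
  have hprogress : Computable fun z : (ℕ × α) × ℕ × ℕ => z.2.2 :=
    Computable.snd.comp Computable.snd
  have hcandidate : Computable fun z : (ℕ × α) × ℕ × ℕ => z.2.1.unpair.1 :=
    Computable.fst.comp (Computable.unpair.comp (Computable.fst.comp Computable.snd))
  have htest : Computable fun z : (ℕ × α) × ℕ × ℕ => b z.1.2 z.2.2 z.2.1.unpair.1 :=
    hb.comp ((Computable.snd.comp Computable.fst).pair (hprogress.pair hcandidate))
  have hstep : Computable₂ fun (q : ℕ × α) (r : ℕ × ℕ) =>
      bif b q.2 r.2 r.1.unpair.1 then r.2 + 1 else r.2 :=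
    htest.cond (Computable.succ.comp hprogress) hprogress
  refine (Computable.nat_rec Computable.fst (Computable.const 0) hstep).of_eq fun ⟨k, a⟩ => ?_
  induction k with
  | zero => rfl
  | succ k ih => simp only [searchProgress, ← ih]

theorem computable₂_decide_searchProgress_lt
    (hb₀ : Computable fun p : α × ℕ × ℕ => b₀ p.1 p.2.1 p.2.2)
    (hb₁ : Computable fun p : α × ℕ × ℕ => b₁ p.1 p.2.1 p.2.2) :
    Computable₂ fun (k : ℕ) (a : α) =>
      decide (searchProgress (b₀ a) k < searchProgress (b₁ a) k) :=
  Primrec.nat_lt.decide.to_comp.comp₂ (computable₂_searchProgress hb₀)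
    (computable₂_searchProgress hb₁)

end Computability

theorem bw_implies_sigma02_separation_general {α : Type*} [Primcodable α]
    (b₀ b₁ : α → ℕ → ℕ → Bool)
    (hb₀ : Computable fun p : α × ℕ × ℕ => b₀ p.1 p.2.1 p.2.2)
    (hb₁ : Computable fun p : α × ℕ × ℕ => b₁ p.1 p.2.1 p.2.2)
    (hdisj : ∀ a, (∀ x, ∃ y, b₀ a x y = true) ∨ (∀ x, ∃ y, b₁ a x y = true)) :
    ∃ H : ℕ → α → Bool, Computable₂ H ∧
      ∀ h : α → Bool, (∀ a, ∃ᶠ k in atTop, H k a = h a) →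
        ∀ a, (¬ (∀ x, ∃ y, b₀ a x y = true) → h a = true) ∧
          (¬ (∀ x, ∃ y, b₁ a x y = true) → h a = false) := by
  refine ⟨_, computable₂_decide_searchProgress_lt hb₀ hb₁,
    fun h hh a => ⟨fun hA₀ => ?_, fun hA₁ => ?_⟩⟩
  · have hlt := eventually_searchProgress_lt hA₀ ((hdisj a).resolve_left hA₀)
    obtain ⟨k, hk, hlt⟩ := ((hh a).and_eventually hlt).exists
    rw [← hk, decide_eq_true hlt]
  · have hlt := eventually_searchProgress_lt hA₁ ((hdisj a).resolve_right hA₁)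
    obtain ⟨k, hk, hlt⟩ := ((hh a).and_eventually hlt).exists
    rw [← hk, decide_eq_false hlt.not_gt]

/-- Computable, instance-wise form of the implication from Bolzano-Weierstraß
to Σ⁰₂-separation: from computable `b₀, b₁` such that for every `n` at least
one of the Π⁰₂ statements `∀x ∃y, bᵢ(n,x,y)` holds, one computes a sequence
`(h_k)` in Cantor space such that every cluster point `h` of `(h_k)` separates
the Σ⁰₂ sets `{n | ¬∀x ∃y, b₀(n,x,y)}` and `{n | ¬∀x ∃y, b₁(n,x,y)}`. -/
theorem bw_implies_sigma02_separation (b₀ b₁ : ℕ → ℕ → ℕ → Bool)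
    (hb₀ : Computable fun p : ℕ × ℕ × ℕ => b₀ p.1 p.2.1 p.2.2)
    (hb₁ : Computable fun p : ℕ × ℕ × ℕ => b₁ p.1 p.2.1 p.2.2)
    (hdisj : ∀ n : ℕ, (∀ x : ℕ, ∃ y : ℕ, b₀ n x y = true) ∨
      (∀ x : ℕ, ∃ y : ℕ, b₁ n x y = true)) :
    ∃ H : ℕ → ℕ → Bool, Computable₂ H ∧
      ∀ h : ℕ → Bool,
        (∀ n : ℕ, ∀ s : ℕ, ∃ k ≥ s, ∀ i ≤ n, H k i = h i) →
        ∀ n : ℕ,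
          (¬ (∀ x : ℕ, ∃ y : ℕ, b₀ n x y = true) → h n = true) ∧
          (¬ (∀ x : ℕ, ∃ y : ℕ, b₁ n x y = true) → h n = false) := by
  obtain ⟨H, hH, hsep⟩ := bw_implies_sigma02_separation_general b₀ b₁ hb₀ hb₁ hdisj
  exact ⟨H, hH, fun h hh => hsep h fun n => frequently_atTop.2 fun s =>
    (hh n s).imp fun _ hk => ⟨hk.1, hk.2 n le_rfl⟩⟩
end

section
/- There is no infinite set S ⊆ ℕ with computable characteristic function that is p-cohesive; that is, for every infinite S ⊆ ℕ whose membership predicate is computable, there exists a primitive recursive function p : ℕ → Bool such that S is not almost contained in {i | p(i) = true} and S is not almost contained in {i | p(i) = false}. -/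
/-!
Fix a recursive enumeration of `S`. Cut `ℕ` into consecutive blocks, coloured alternately `true` and
`false`, and keep the current block open until some element of it has been enumerated. Since `S` is
infinite every block is eventually closed, so each colour occurs infinitely often on `S`. The colour
of `n` depends only on the first `n` stages of the enumeration, hence the colouring is primitive
recursive although the block lengths need not be.
-/

open Filter Set

theorem exists_primrecRel_monotone_of_rePred {α : Type*} [Primcodable α] {P : α → Prop}
    (hP : REPred P) :
    ∃ R : ℕ → α → Prop, PrimrecRel R ∧ Monotone R ∧ ∀ a, P a ↔ ∃ k, R k a := by
  obtain ⟨c, hc⟩ := Nat.Partrec.Code.exists_code.1 hP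
  have hdom (a : α) : P a ↔ 0 ∈ c.eval (Encodable.encode a) := by
    simp [hc, Unique.exists_iff]
  refine ⟨fun k a => c.evaln k (Encodable.encode a) = some 0, ?_, ?_, fun a => ?_⟩
  · exact Primrec.eq.comp (Nat.Partrec.Code.primrec_evaln.comp
      ((Primrec.fst.pair (.const c)).pair (Primrec.encode.comp .snd))) (.const (some 0))
  · exact fun _ _ hkl _ => Nat.Partrec.Code.evaln_mono hkl
  · exact (hdom a).trans Nat.Partrec.Code.evaln_complete

section Blocks

variable (Q : ℕ → ℕ → Prop) [DecidableRel Q]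

/-- The alternating block colouring governed by `Q`, where `Q a k` says that a block starting at `a`
may be closed after `k`. The state at `n` is the colour of the block containing `n`, paired with the
starting point of that block. -/
def blockState : ℕ → Bool × ℕ
  | 0 => (false, 0)
  | k + 1 => if Q (blockState k).2 k then (!(blockState k).1, k + 1) else blockState k

variable {Q}

theorem primrec_blockState (hQ : PrimrecRel Q) : Primrec (blockState Q) := by
  have hstep : Primrec₂ fun (k : ℕ) (s : Bool × ℕ) => if Q s.2 k then (!s.1, k + 1) else s :=
    Primrec.ite (hQ.comp (Primrec.snd.comp .snd) .fst)
      ((Primrec.not.comp (Primrec.fst.comp .snd)).pair (Primrec.succ.comp .fst)) .snd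
  refine (Primrec.nat_rec₁ (false, 0) hstep).of_eq fun n => ?_
  induction n with
  | zero => rfl
  | succ n ih => rw [blockState, ← ih]

theorem exists_close_of_frequently (hQ : ∀ a, ∃ᶠ k in atTop, Q a k) (n : ℕ) :
    ∃ l ≥ n, Q (blockState Q n).2 l ∧ ∀ x ∈ Icc n l, blockState Q x = blockState Q n := by
  have hclose : ∃ l, n ≤ l ∧ Q (blockState Q n).2 l := frequently_atTop.1 (hQ _) n
  obtain ⟨hnl, hl⟩ := Nat.find_spec hclose
  refine ⟨Nat.find hclose, hnl, hl, fun x hx => ?_⟩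
  obtain ⟨hnx, hxl⟩ := hx
  induction x, hnx using Nat.le_induction with
  | base => rfl
  | succ x hnx ih =>
    have hx : blockState Q x = blockState Q n := ih (Nat.le_of_succ_le hxl)
    have hopen : ¬ Q (blockState Q n).2 x := fun h => Nat.find_min hclose hxl ⟨hnx, h⟩
    rw [blockState, hx, if_neg hopen]

theorem exists_gt_blockState_eq_not (hQ : ∀ a, ∃ᶠ k in atTop, Q a k) (N : ℕ) :
    ∃ n > N, blockState Q n = (!(blockState Q N).1, n) := by
  obtain ⟨l, hNl, hl, hconst⟩ := exists_close_of_frequently hQ N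
  refine ⟨l + 1, Nat.lt_succ_of_le hNl, ?_⟩
  rw [blockState, hconst l ⟨hNl, le_rfl⟩, if_pos hl]

theorem exists_gt_blockState_eq (hQ : ∀ a, ∃ᶠ k in atTop, Q a k) (b : Bool) (N : ℕ) :
    ∃ n > N, blockState Q n = (b, n) := by
  obtain ⟨m, hNm, hm⟩ := exists_gt_blockState_eq_not hQ N
  obtain ⟨n, hmn, hn⟩ := exists_gt_blockState_eq_not hQ m
  rw [hm, Bool.not_not] at hn
  obtain hb | hb := Bool.eq_or_eq_not b (blockState Q N).1
  · exact ⟨n, hNm.trans hmn, hb ▸ hn⟩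
  · exact ⟨m, hNm, hb ▸ hm⟩

theorem exists_gt_closed_block_of_color (hQ : ∀ a, ∃ᶠ k in atTop, Q a k) (b : Bool) (N : ℕ) :
    ∃ n > N, ∃ l, Q n l ∧ ∀ x ∈ Icc n l, (blockState Q x).1 = b := by
  obtain ⟨n, hNn, hn⟩ := exists_gt_blockState_eq hQ b N
  obtain ⟨l, -, hl, hconst⟩ := exists_close_of_frequently hQ n
  rw [hn] at hl hconst
  exact ⟨n, hNn, l, hl, fun x hx => congrArg Prod.fst (hconst x hx)⟩

end Blocks

section Enumeration

/-- The condition for closing a block that starts at `a`: some element of `[a, k)` has been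
enumerated by stage `k`, where `R k x` means that `x` has been enumerated by stage `k`. -/
def HitsIco (R : ℕ → ℕ → Prop) (a k : ℕ) : Prop :=
  ∃ x < k, a ≤ x ∧ R k x

variable {R : ℕ → ℕ → Prop}

theorem primrecRel_hitsIco (hR : PrimrecRel R) : PrimrecRel (HitsIco R) := by
  have hbody : PrimrecRel fun (x : ℕ) (q : ℕ × ℕ) => q.1 ≤ x ∧ R q.2 x :=
    (Primrec.nat_le.comp (Primrec.fst.comp .snd) .fst).and
      (hR.comp (Primrec.snd.comp .snd) .fst)
  exact (hbody.exists_mem_list.comp (Primrec.list_range.comp .snd) .id).of_eq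
    fun q => by simp only [List.mem_range, id, HitsIco]

theorem frequently_hitsIco (hmono : Monotone R) (hinf : {x | ∃ k, R k x}.Infinite) (a : ℕ) :
    ∃ᶠ k in atTop, HitsIco R a k := by
  obtain ⟨x, ⟨m, hm⟩, hax⟩ := hinf.exists_gt a
  refine Eventually.frequently ?_
  filter_upwards [eventually_gt_atTop x, eventually_ge_atTop m] with k hxk hmk
  exact ⟨x, hxk, hax.le, hmono hmk x hm⟩

theorem exists_primrec_forall_infinite_color (hR : PrimrecRel R) (hmono : Monotone R)
    (hinf : {x | ∃ k, R k x}.Infinite) :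
    ∃ p : ℕ → Bool, Primrec p ∧ ∀ b, {x | (∃ k, R k x) ∧ p x = b}.Infinite := by
  classical
  refine ⟨fun n => (blockState (HitsIco R) n).1,
    Primrec.fst.comp (primrec_blockState (primrecRel_hitsIco hR)), fun b => ?_⟩
  refine infinite_of_forall_exists_gt fun N => ?_
  obtain ⟨n, hNn, l, ⟨x, hxl, hnx, hx⟩, hcolor⟩ :=
    exists_gt_closed_block_of_color (frequently_hitsIco hmono hinf) b N
  exact ⟨x, ⟨⟨l, hx⟩, hcolor x ⟨hnx, hxl.le⟩⟩, hNn.trans_le hnx⟩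

end Enumeration

theorem no_computable_p_cohesive_general (S : Set ℕ) (hinf : S.Infinite)
    (hS : REPred fun n => n ∈ S) :
    ∃ p : ℕ → Bool, Primrec p ∧
      ¬ (S \ { i : ℕ | p i = true }).Finite ∧
      ¬ (S \ { i : ℕ | p i = false }).Finite := by
  obtain ⟨R, hR, hmono, hSR⟩ := exists_primrecRel_monotone_of_rePred hS
  obtain rfl : S = {x | ∃ k, R k x} := Set.ext hSR
  obtain ⟨p, hp, hcolor⟩ := exists_primrec_forall_infinite_color hR hmono hinf
  refine ⟨p, hp, (hcolor false).mono ?_, (hcolor true).mono ?_⟩ <;>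
  · rintro x ⟨hxS, hpx⟩
    exact ⟨hxS, by simp [hpx]⟩

/-- No computable infinite set is p-cohesive: for every infinite `S ⊆ ℕ` with
computable membership predicate there is a primitive recursive `p : ℕ → Bool`
such that `S` is neither almost contained in `{i | p i = true}` nor almost
contained in `{i | p i = false}`. -/
theorem no_computable_p_cohesive (S : Set ℕ) (hinf : S.Infinite)
    (hS : ComputablePred fun n => n ∈ S) :
    ∃ p : ℕ → Bool, Primrec p ∧
      ¬ (S \ { i : ℕ | p i = true }).Finite ∧
      ¬ (S \ { i : ℕ | p i = false }).Finite :=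
  no_computable_p_cohesive_general S hinf hS.to_re
end

section
/- There exists a computable sequence y : ℕ → ℚ of rational numbers with 0 ≤ y_i ≤ 1 for all i, such that there is no computable strictly monotone function f : ℕ → ℕ for which the subsequence (y_{f(j)})_{j∈ℕ} is a Cauchy sequence (i.e. such that for every n there exists s with |y_{f(v)} − y_{f(w)}| < 2^{−n} for all v, w ≥ s). -/
/-!
Let `p c i` be the value `c j < i` for the largest `j` for which program `c` is seen to return
such a value within `i` steps, and colour the numbers so that `i` and `p c i` get opposite
colours. If `c` computes `f` and `f` tends to infinity, then for large `v` the number `p c (f v)`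
is `f j` with `j` large, so the colour alternates along `f` and is never eventually constant. The
colour of `i` for the `k`-th program is the `k`-th base-`4` digit of `y i`, truncated to `i`
digits. Two numbers all of whose base-`4` digits are `0` or `1` agree in every digit at a scale
well above their distance, so along a Cauchy subsequence `y ∘ f` every colour stabilises; hence
`f` is not computable.
-/

open Encodable Filter
open Nat.Partrec (Code)

/-! ### Primitive recursive construction of rationals -/

section PrimrecRat

variable {α β : Type*} [Primcodable α]

open Classical in
theorem encode_ofEncodableOfInfinite [Encodable β] [Infinite β] (b : β) :
    (Denumerable.ofEncodableOfInfinite β).encode b =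
      ((List.range (encode b)).filter (· ∈ Set.range (encode : β → ℕ))).length := by
  rw [← List.countP_eq_length_filter]
  change @List.countP ℕ _ _ = _
  congr!

theorem primrec_ofEncodableOfInfinite [Encodable β] [Infinite β]
    (hrange : PrimrecPred (· ∈ Set.range (encode : β → ℕ))) {f : α → β}
    (hf : Primrec fun a => encode (f a)) :
    @Primrec α β _ (@Primcodable.ofDenumerable β (Denumerable.ofEncodableOfInfinite β)) f := by
  classical
  let := Denumerable.ofEncodableOfInfinite β
  refine Primrec.encode_iff.1 <| (Primrec.list_length.comp <|
    (Primrec.listFilter hrange).comp <| Primrec.list_range.comp hf).of_eq fun a => ?_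
  exact (encode_ofEncodableOfInfinite (f a)).symm

theorem primrec_natCast_int : Primrec (Nat.cast : ℕ → ℤ) :=
  Primrec.encode_iff.1 <| Primrec.nat_mul.comp (Primrec.const 2) Primrec.id

theorem primrec_intNatAbs : Primrec Int.natAbs := by
  refine (Primrec.nat_div.comp (Primrec.succ.comp Primrec.encode) (Primrec.const 2)).of_eq ?_
  rintro (n | n)
  · change (2 * n + 1) / 2 = n
    lia
  · change (2 * n + 1 + 1) / 2 = n + 1
    lia

theorem primrec_nat_dvd : PrimrecRel ((· ∣ ·) : ℕ → ℕ → Prop) :=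
  (Primrec.eq.comp (Primrec.nat_mod.comp Primrec.snd Primrec.fst) (Primrec.const 0)).of_eq
    fun _ => Nat.dvd_iff_mod_eq_zero.symm

theorem findGreatest_dvd_and_dvd (a b : ℕ) :
    Nat.findGreatest (fun d => d ∣ a ∧ d ∣ b) (a + b) = a.gcd b := by
  rw [Nat.findGreatest_eq_iff]
  refine ⟨?_, fun _ => ⟨a.gcd_dvd_left b, a.gcd_dvd_right b⟩, fun d hlt hle ⟨hda, hdb⟩ => ?_⟩
  · rcases a.eq_zero_or_pos with rfl | ha
    · simp
    · exact (Nat.gcd_le_left b ha).trans (Nat.le_add_right a b)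
  · have hpos : 0 < a.gcd b := Nat.gcd_pos_iff.2 (by lia)
    exact (Nat.le_of_dvd hpos (Nat.dvd_gcd hda hdb)).not_gt hlt

theorem primrec_nat_gcd : Primrec₂ Nat.gcd := by
  have hdvd : PrimrecRel fun (x : ℕ × ℕ) d => d ∣ x.1 ∧ d ∣ x.2 :=
    (primrec_nat_dvd.comp Primrec.snd (Primrec.fst.comp Primrec.fst)).and
      (primrec_nat_dvd.comp Primrec.snd (Primrec.snd.comp Primrec.fst))
  exact (Primrec.nat_findGreatest Primrec.nat_add hdvd).of_eq
    fun x => findGreatest_dvd_and_dvd x.1 x.2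

theorem primrec_nat_pow : Primrec₂ ((· ^ ·) : ℕ → ℕ → ℕ) :=
  Primrec₂.unpaired'.1 Nat.Primrec.pow

-- The instance is explicit because the encoding underlying `Primcodable ℚ` is a different one.
theorem encode_rat_eq_pair (q : ℚ) :
    Rat.instEncodable.encode q = Nat.pair (encode q.num) q.den :=
  rfl

theorem mem_range_encode_rat_iff (m : ℕ) :
    m ∈ Set.range Rat.instEncodable.encode ↔
      0 < m.unpair.2 ∧ (Denumerable.ofNat ℤ m.unpair.1).natAbs.gcd m.unpair.2 = 1 := by
  constructor
  · rintro ⟨q, rfl⟩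
    rw [encode_rat_eq_pair, Nat.unpair_pair, Denumerable.ofNat_encode]
    exact ⟨q.den_pos, q.reduced⟩
  · rintro ⟨hpos, hcoprime⟩
    refine ⟨⟨Denumerable.ofNat ℤ m.unpair.1, m.unpair.2, hpos.ne', hcoprime⟩, ?_⟩
    rw [encode_rat_eq_pair, Denumerable.encode_ofNat, Nat.pair_unpair]

theorem primrecPred_mem_range_encode_rat :
    PrimrecPred (· ∈ Set.range Rat.instEncodable.encode) := by
  have hnum : Primrec fun m : ℕ => (Denumerable.ofNat ℤ m.unpair.1).natAbs :=
    primrec_intNatAbs.comp <| (Primrec.ofNat ℤ).comp <| Primrec.fst.comp Primrec.unpair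
  have hden : Primrec fun m : ℕ => m.unpair.2 := Primrec.snd.comp Primrec.unpair
  exact ((Primrec.nat_lt.comp (Primrec.const 0) hden).and
    (Primrec.eq.comp (primrec_nat_gcd.comp hnum hden) (Primrec.const 1))).of_eq
      fun m => (mem_range_encode_rat_iff m).symm

theorem primrec_rat_of_num_den {q : α → ℚ} (hnum : Primrec fun a => (q a).num)
    (hden : Primrec fun a => (q a).den) : Primrec q :=
  primrec_ofEncodableOfInfinite primrecPred_mem_range_encode_rat <|
    (Primrec₂.natPair.comp (Primrec.encode.comp hnum) hden).of_eq fun a =>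
      (encode_rat_eq_pair (q a)).symm

theorem primrec_natCast_div_rat : Primrec₂ fun a b : ℕ => (a / b : ℚ) := by
  have hzero : PrimrecPred fun x : ℕ × ℕ => x.2 = 0 :=
    Primrec.eq.comp Primrec.snd (Primrec.const 0)
  have hgcd : Primrec fun x : ℕ × ℕ => x.2.gcd x.1 :=
    primrec_nat_gcd.comp Primrec.snd Primrec.fst
  suffices Primrec fun x : ℕ × ℕ => mkRat x.1 x.2 from
    this.of_eq fun x => (Rat.mkRat_eq_divInt ..).trans (Rat.natCast_div_eq_divInt ..).symm
  refine primrec_rat_of_num_den ?_ ?_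
  · refine (primrec_natCast_int.comp <| Primrec.ite hzero (Primrec.const 0) <|
      Primrec.nat_div.comp Primrec.fst hgcd).of_eq fun x => ?_
    rw [Rat.num_mkRat, Int.natAbs_natCast]
    split <;> simp
  · refine (Primrec.ite hzero (Primrec.const 1) <|
      Primrec.nat_div.comp Primrec.snd hgcd).of_eq fun x => ?_
    rw [Rat.den_mkRat, Int.natAbs_natCast]

end PrimrecRat

/-! ### Base-`4` expansions with digits `0` and `1` -/

section QuaternaryExpansion

/-- The natural number whose base-`4` expansion is `d 0, …, d (n - 1)`, most significant digit
first. -/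
def quaternaryNumerator (d : ℕ → Bool) : ℕ → ℕ
  | 0 => 0
  | n + 1 => 4 * quaternaryNumerator d n + (d n).toNat

/-- The rational number `0.d₀d₁…dₙ₋₁` in base `4`. Base `4` leaves gaps between the expansions with
digits `0` and `1`, so that nearby numbers of this form share their leading digits. -/
def quaternaryFraction (d : ℕ → Bool) (n : ℕ) : ℚ :=
  quaternaryNumerator d n / (4 ^ n : ℕ)

theorem primrec_quaternaryNumerator {α : Type*} [Primcodable α] {d : α → ℕ → Bool}
    (hd : Primrec₂ d) : Primrec₂ fun a n => quaternaryNumerator (d a) n := by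
  have hstep : Primrec₂ fun (a : α) (x : ℕ × ℕ) => 4 * x.2 + (d a x.1).toNat :=
    Primrec.nat_add.comp
      (Primrec.nat_mul.comp (Primrec.const 4) (Primrec.snd.comp Primrec.snd))
      ((Primrec.dom_bool Bool.toNat).comp <|
        hd.comp Primrec.fst (Primrec.fst.comp Primrec.snd))
  refine (Primrec.nat_rec (Primrec.const 0) hstep).of_eq fun a n => ?_
  induction n with
  | zero => rfl
  | succ n ih => simp only [quaternaryNumerator, ← ih]

theorem primrec_quaternaryFraction {α : Type*} [Primcodable α] {d : α → ℕ → Bool}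
    (hd : Primrec₂ d) : Primrec₂ fun a n => quaternaryFraction (d a) n :=
  primrec_natCast_div_rat.comp (primrec_quaternaryNumerator hd)
    (primrec_nat_pow.comp (Primrec.const 4) Primrec.snd)

variable {d d' : ℕ → Bool} {m n n' k : ℕ}

theorem quaternaryNumerator_mul_pow_le (d : ℕ → Bool) (m t : ℕ) :
    quaternaryNumerator d m * 4 ^ t ≤ quaternaryNumerator d (m + t) := by
  induction t with
  | zero => simp
  | succ t ih =>
    rw [← add_assoc, quaternaryNumerator, pow_succ]
    lia

theorem two_mul_quaternaryNumerator_lt (d : ℕ → Bool) (m t : ℕ) :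
    2 * quaternaryNumerator d (m + t) < (2 * quaternaryNumerator d m + 1) * 4 ^ t := by
  induction t with
  | zero => simp
  | succ t ih =>
    have hdigit := (d (m + t)).toNat_le
    rw [← add_assoc, quaternaryNumerator, pow_succ]
    lia

theorem quaternaryFraction_add_mul_pow (d : ℕ → Bool) (m t : ℕ) :
    quaternaryFraction d (m + t) * 4 ^ m = quaternaryNumerator d (m + t) / 4 ^ t := by
  rw [quaternaryFraction]
  push_cast
  rw [pow_add]
  field_simp

theorem quaternaryNumerator_le_quaternaryFraction_mul (h : m ≤ n) :
    (quaternaryNumerator d m : ℚ) ≤ quaternaryFraction d n * 4 ^ m := by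
  obtain ⟨t, rfl⟩ := Nat.exists_eq_add_of_le h
  rw [quaternaryFraction_add_mul_pow, le_div_iff₀ (by positivity)]
  exact_mod_cast quaternaryNumerator_mul_pow_le d m t

theorem quaternaryFraction_mul_lt (h : m ≤ n) :
    quaternaryFraction d n * 4 ^ m < quaternaryNumerator d m + 1 / 2 := by
  obtain ⟨t, rfl⟩ := Nat.exists_eq_add_of_le h
  have hlt : (2 * quaternaryNumerator d (m + t) : ℚ) <
      (2 * quaternaryNumerator d m + 1) * 4 ^ t := by
    exact_mod_cast two_mul_quaternaryNumerator_lt d m t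
  rw [quaternaryFraction_add_mul_pow, div_lt_iff₀ (by positivity)]
  linarith

theorem quaternaryFraction_mem_Icc (d : ℕ → Bool) (n : ℕ) :
    quaternaryFraction d n ∈ Set.Icc 0 1 := by
  have hlower := quaternaryNumerator_le_quaternaryFraction_mul (d := d) n.zero_le
  have hupper := quaternaryFraction_mul_lt (d := d) n.zero_le
  simp only [quaternaryNumerator, pow_zero, mul_one, Nat.cast_zero] at hlower hupper
  exact ⟨hlower, by linarith⟩

theorem quaternaryNumerator_le_of_sub_lt (hn : m ≤ n) (hn' : m ≤ n')
    (h : quaternaryFraction d n - quaternaryFraction d' n' < (2 : ℚ) ^ (-((2 * m + 1 : ℕ) : ℤ))) :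
    quaternaryNumerator d m ≤ quaternaryNumerator d' m := by
  have hscale : (2 : ℚ) ^ (-((2 * m + 1 : ℕ) : ℤ)) * 4 ^ m = 1 / 2 := by
    rw [zpow_neg, zpow_natCast, pow_succ, pow_mul]
    norm_num
  have hscaled := mul_lt_mul_of_pos_right h (by positivity : (0 : ℚ) < 4 ^ m)
  have hlt : (quaternaryNumerator d m : ℚ) < quaternaryNumerator d' m + 1 := by
    linarith [quaternaryNumerator_le_quaternaryFraction_mul (d := d) hn,
      quaternaryFraction_mul_lt (d := d') hn']
  exact Nat.lt_succ_iff.1 (by exact_mod_cast hlt)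

theorem digit_eq_of_quaternaryNumerator_succ_eq
    (h : quaternaryNumerator d (k + 1) = quaternaryNumerator d' (k + 1)) : d k = d' k := by
  have hd := (d k).toNat_le
  have hd' := (d' k).toNat_le
  rw [quaternaryNumerator, quaternaryNumerator] at h
  exact Function.LeftInverse.injective Bool.ofNat_toNat (by lia)

theorem digit_eq_of_abs_sub_lt (hn : k < n) (hn' : k < n')
    (h : |quaternaryFraction d n - quaternaryFraction d' n'| <
      (2 : ℚ) ^ (-((2 * (k + 1) + 1 : ℕ) : ℤ))) :
    d k = d' k := by
  rw [abs_sub_lt_iff] at h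
  exact digit_eq_of_quaternaryNumerator_succ_eq <| le_antisymm
    (quaternaryNumerator_le_of_sub_lt hn hn' h.1) (quaternaryNumerator_le_of_sub_lt hn' hn h.2)

end QuaternaryExpansion

/-! ### Colourings alternating along a predecessor function -/

section AlternatingColor

/-- The 2-colouring of `ℕ` in which `i` and its predecessor `p i` have opposite colours whenever
`p i < i`; all other numbers have colour `false`. -/
def alternatingColor (p : ℕ → ℕ) (i : ℕ) : Bool :=
  if p i < i then !alternatingColor p (p i) else false
termination_by i

theorem alternatingColor_of_lt {p : ℕ → ℕ} {i : ℕ} (h : p i < i) :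
    alternatingColor p i = !alternatingColor p (p i) := by
  rw [alternatingColor, if_pos h]

theorem primrec_alternatingColor {α : Type*} [Primcodable α] {p : α → ℕ → ℕ}
    (hp : Primrec₂ p) : Primrec₂ fun a i => alternatingColor (p a) i := by
  have hlookup : Primrec fun x : α × List Bool => x.2[p x.1 x.2.length]? :=
    Primrec.list_getElem?.comp Primrec.snd
      (hp.comp Primrec.fst (Primrec.list_length.comp Primrec.snd))
  refine Primrec.nat_strong_rec _ (g := fun a L => some !(L[p a L.length]?.getD true)) ?_ ?_
  · exact Primrec.option_some.comp <| Primrec.not.comp <|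
      Primrec.option_getD.comp hlookup (Primrec.const true)
  · intro a i
    rw [alternatingColor]
    by_cases h : p a i < i <;> simp [h]

theorem not_eventuallyConst_alternatingColor_comp {p f : ℕ → ℕ}
    (h : ∀ s, ∃ v ≥ s, ∃ j ≥ s, p (f v) = f j ∧ f j < f v) :
    ¬ EventuallyConst (alternatingColor p ∘ f) atTop := by
  intro hconst
  obtain ⟨s, hs⟩ := eventuallyConst_atTop.1 hconst
  obtain ⟨v, hv, j, hj, hpv, hlt⟩ := h s
  have hflip : alternatingColor p (f v) = !alternatingColor p (f j) := by
    rw [← hpv] at hlt ⊢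
    exact alternatingColor_of_lt hlt
  have hsame : alternatingColor p (f v) = alternatingColor p (f j) := (hs v hv).trans (hs j hj).symm
  exact Bool.not_ne_self _ (hflip.symm.trans hsame)

end AlternatingColor

/-! ### Diagonalisation against all programs -/

section Diagonalization

/-- The output of program `c` on input `j` if it appears within `i` steps. Otherwise the value is
`i`, which the condition `stageValue c i j < i` excludes. -/
def stageValue (c : Code) (i j : ℕ) : ℕ :=
  (c.evaln i j).getD i

/-- The output of `c` at the largest input `j ≤ i` where an output below `i` appears within `i`
steps. If there is no such input, this is `stageValue c i 0`, which is then at least `i`. -/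
def lastValueBelow (c : Code) (i : ℕ) : ℕ :=
  stageValue c i (Nat.findGreatest (fun j => stageValue c i j < i) i)

theorem primrec_stageValue : Primrec fun x : (Code × ℕ) × ℕ => stageValue x.1.1 x.1.2 x.2 :=
  Primrec.option_getD.comp
    (Code.primrec_evaln.comp <| Primrec.pair
      (Primrec.pair (Primrec.snd.comp Primrec.fst) (Primrec.fst.comp Primrec.fst)) Primrec.snd)
    (Primrec.snd.comp Primrec.fst)

theorem primrec_lastValueBelow : Primrec₂ lastValueBelow := by
  have hlt : PrimrecRel fun (x : Code × ℕ) j => stageValue x.1 x.2 j < x.2 :=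
    Primrec.nat_lt.comp primrec_stageValue (Primrec.snd.comp Primrec.fst)
  exact primrec_stageValue.comp <|
    Primrec.pair Primrec.id (Primrec.nat_findGreatest Primrec.snd hlt)

variable {c : Code} {f : ℕ → ℕ}

theorem stageValue_mem_eval {i j : ℕ} (h : stageValue c i j < i) :
    stageValue c i j ∈ c.eval j := by
  rw [stageValue] at h ⊢
  rcases hout : c.evaln i j with _ | x
  · simp [hout] at h
  · exact Code.evaln_sound hout

theorem eventually_stageValue_eq {j x : ℕ} (h : x ∈ c.eval j) :
    ∀ᶠ i in atTop, stageValue c i j = x := by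
  obtain ⟨k, hk⟩ := Code.evaln_complete.1 h
  filter_upwards [eventually_ge_atTop k] with i hi
  rw [stageValue, Option.mem_def.1 (Code.evaln_mono hi hk), Option.getD_some]

theorem eventually_lastValueBelow_eq (hc : ∀ j, f j ∈ c.eval j) (s : ℕ) :
    ∀ᶠ i in atTop, ∃ j ≥ s, lastValueBelow c i = f j ∧ f j < i := by
  filter_upwards [eventually_stageValue_eq (hc s), eventually_gt_atTop (f s),
    eventually_ge_atTop s] with i hstage hfs hsi
  set j := Nat.findGreatest (fun j => stageValue c i j < i) i
  have hs : stageValue c i s < i := hstage.trans_lt hfs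
  have hj : stageValue c i j < i :=
    Nat.findGreatest_spec (P := fun j => stageValue c i j < i) hsi hs
  have hfj : stageValue c i j = f j := Part.mem_unique (stageValue_mem_eval hj) (hc j)
  exact ⟨j, Nat.le_findGreatest hsi hs, hfj, hfj ▸ hj⟩

theorem not_eventuallyConst_alternatingColor_lastValueBelow_comp (hc : ∀ j, f j ∈ c.eval j)
    (hlim : Tendsto f atTop atTop) :
    ¬ EventuallyConst (alternatingColor (lastValueBelow c) ∘ f) atTop := by
  refine not_eventuallyConst_alternatingColor_comp fun s => ?_
  obtain ⟨v, hlast, hv⟩ :=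
    ((hlim.eventually (eventually_lastValueBelow_eq hc s)).and (eventually_ge_atTop s)).exists
  exact ⟨v, hv, hlast⟩

/-- The colour of `i` in the colouring that diagonalises against the program with number `k`. -/
def diagonalDigit (i k : ℕ) : Bool :=
  alternatingColor (lastValueBelow (Denumerable.ofNat Code k)) i

theorem primrec_diagonalDigit : Primrec₂ diagonalDigit :=
  (primrec_alternatingColor primrec_lastValueBelow).comp
    ((Primrec.ofNat Code).comp Primrec.snd) Primrec.fst

theorem exists_not_eventuallyConst_diagonalDigit (hf : Computable f)
    (hlim : Tendsto f atTop atTop) :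
    ∃ k, ¬ EventuallyConst (fun v => diagonalDigit (f v) k) atTop := by
  obtain ⟨c, hc⟩ := Code.exists_code.1 (Partrec.nat_iff.1 hf.partrec)
  have hmem (j : ℕ) : f j ∈ c.eval j := by
    rw [hc]
    exact Part.mem_some (f j)
  refine ⟨encode c, ?_⟩
  simp only [diagonalDigit, Denumerable.ofNat_encode]
  exact not_eventuallyConst_alternatingColor_lastValueBelow_comp hmem hlim

end Diagonalization

theorem no_computable_cauchy_subsequence_general :
    ∃ y : ℕ → ℚ, Primrec y ∧ (∀ i, 0 ≤ y i ∧ y i ≤ 1) ∧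
      ¬ ∃ f : ℕ → ℕ, Computable f ∧ Tendsto f atTop atTop ∧
        ∀ n : ℕ, ∃ s : ℕ, ∀ v ≥ s, ∀ w ≥ s,
          |y (f v) - y (f w)| < (2 : ℚ) ^ (-(n : ℤ)) := by
  refine ⟨fun i => quaternaryFraction (diagonalDigit i) i,
    (primrec_quaternaryFraction primrec_diagonalDigit).comp Primrec.id Primrec.id,
    fun i => quaternaryFraction_mem_Icc _ i, ?_⟩
  rintro ⟨f, hf, hlim, hcauchy⟩
  obtain ⟨k, hk⟩ := exists_not_eventuallyConst_diagonalDigit hf hlim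
  obtain ⟨s, hs⟩ := hcauchy (2 * (k + 1) + 1)
  obtain ⟨t, ht⟩ := eventually_atTop.1 (hlim.eventually_gt_atTop k)
  refine hk (eventuallyConst_atTop.2 ⟨max s t, fun v hv => ?_⟩)
  exact digit_eq_of_abs_sub_lt (ht v (le_of_max_le_right hv)) (ht _ (le_max_right s t))
    (hs v (le_of_max_le_left hv) _ (le_max_left s t))

/-- There is a computable sequence of rationals in `[0,1]` with no computable
Cauchy subsequence: no computable strictly monotone `f` yields a subsequence
`(y_{f(j)})` satisfying the Cauchy condition. -/
theorem no_computable_cauchy_subsequence :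
    ∃ y : ℕ → ℚ, Computable y ∧ (∀ i, 0 ≤ y i ∧ y i ≤ 1) ∧
      ¬ ∃ f : ℕ → ℕ, Computable f ∧ StrictMono f ∧
        ∀ n : ℕ, ∃ s : ℕ, ∀ v ≥ s, ∀ w ≥ s,
          |y (f v) - y (f w)| < (2 : ℚ) ^ (-(n : ℤ)) := by
  obtain ⟨y, hy, hbounds, hno⟩ := no_computable_cauchy_subsequence_general
  exact ⟨y, hy.to_comp, hbounds, fun ⟨f, hf, hmono, hcauchy⟩ =>
    hno ⟨f, hf, hmono.tendsto_atTop, hcauchy⟩⟩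
end
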